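/- Every rule of the system P is truth-preserving: for every rule instance of P with premise A and conclusion B (including the equational rules induced by the congruence =_P) and every Boolean valuation v of the variables, if v(A) = true then v(B) = true; moreover, if A =_P B then v(A) = v(B) for every valuation v. Consequently, if there is a derivation in P from A to B and v(A) = true, then v(B) = true. -/

import Mathlib

/-!
The Subatomic system-1.1 `P`: formulas built from the constants `T`, `F`,
literals, and the binary operations `∧`, `π₀`, `π₁`, `∨`.
-/

/-- The four binary operations of `P`. -/
inductive POp : Type where
  | and | pi0 | pi1 | or
deriving DecidableEq

/-- Formulas of `P`. -/
inductive PF : Type where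
  | tt : PF
  | ff : PF
  | var : ℕ → PF
  | nvar : ℕ → PF
  | op : POp → PF → PF → PF
deriving DecidableEq

/-- Negation on operations: `∧` and `∨` are De Morgan duals, the projections
`π₀` and `π₁` are self-dual. -/
def POp.neg : POp → POp
  | .and => .or
  | .or => .and
  | .pi0 => .pi0
  | .pi1 => .pi1

/-- Negation of formulas of `P` (an involution). -/
def PF.neg : PF → PF
  | .tt => .ff
  | .ff => .tt
  | .var n => .nvar n
  | .nvar n => .var n
  | .op o A B => .op o.neg A.neg B.neg

/-- Boolean semantics of `P`: `π₀` and `π₁` are the projections. -/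
def PF.eval (v : ℕ → Bool) : PF → Bool
  | .tt => true
  | .ff => false
  | .var n => v n
  | .nvar n => ! v n
  | .op .and A B => A.eval v && B.eval v
  | .op .or A B => A.eval v || B.eval v
  | .op .pi0 A _B => A.eval v
  | .op .pi1 _A B => B.eval v

/-- The generating axioms of the congruence `=_P`. -/
inductive PAx : PF → PF → Prop where
  | assoc (o : POp) (A B C : PF) : PAx (.op o (.op o A B) C) (.op o A (.op o B C))
  | comm_and (A B : PF) : PAx (.op .and A B) (.op .and B A)
  | comm_or (A B : PF) : PAx (.op .or A B) (.op .or B A)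
  | or_ff (A : PF) : PAx (.op .or A .ff) A
  | pi0_ax (A B : PF) : PAx (.op .pi0 A B) A
  | pi1_ax (A B : PF) : PAx (.op .pi1 A B) B
  | and_ff (u : PF) (hu : u = .tt ∨ u = .ff) : PAx (.op .and u .ff) .ff
  | em_const (u : PF) (hu : u = .tt ∨ u = .ff) : PAx (.op .or u u.neg) .tt
  | em_var (n : ℕ) : PAx (.op .or (.var n) (.nvar n)) .tt
  | idem_const (u : PF) (hu : u = .tt ∨ u = .ff) : PAx (.op .or u u) u
  | idem_var (n : ℕ) : PAx (.op .or (.var n) (.var n)) (.var n)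

/-- The congruence `=_P`: the least congruence generated by the axioms. -/
inductive PEqv : PF → PF → Prop where
  | ax {A B} : PAx A B → PEqv A B
  | refl (A) : PEqv A A
  | symm {A B} : PEqv A B → PEqv B A
  | trans {A B C} : PEqv A B → PEqv B C → PEqv A C
  | congr {A A' B B'} (o : POp) : PEqv A A' → PEqv B B' →
      PEqv (.op o A B) (.op o A' B')

/-- One inference step of the system `P`, applicable at any depth inside a
formula: the rules `aiⱼ↓`, `aiⱼ↑`, `s↓`, `s↑`, `m↓`, `m↑`, `cⱼ↓`, `cⱼ↑`
(for `j ∈ {0,1}`) and the equational rules `E ⟶ F` and `F̄ ⟶ Ē` for each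
generating axiom `E = F` of `=_P`. -/
inductive PStep : PF → PF → Prop where
  | ai_down (j : POp) (hj : j = .pi0 ∨ j = .pi1) (A B C D : PF) :
      PStep (.op j (.op .or A B) (.op .or C D)) (.op .or (.op j A C) (.op j B D))
  | ai_up (j : POp) (hj : j = .pi0 ∨ j = .pi1) (A B C D : PF) :
      PStep (.op .and (.op j A C) (.op j B D)) (.op j (.op .and A B) (.op .and C D))
  | s_down (A B C D : PF) :
      PStep (.op .and (.op .or A B) (.op .or C D)) (.op .or (.op .and A C) (.op .or B D))
  | s_up (A B C D : PF) :
      PStep (.op .and (.op .or A C) (.op .and B D)) (.op .or (.op .and A B) (.op .and C D))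
  | m_down (A B C D : PF) :
      PStep (.op .or (.op .and A B) (.op .and C D)) (.op .and (.op .or A C) (.op .or B D))
  | m_up (A B C D : PF) :
      PStep (.op .or (.op .and A C) (.op .and B D)) (.op .and (.op .or A B) (.op .or C D))
  | c_down (j : POp) (hj : j = .pi0 ∨ j = .pi1) (A B C D : PF) :
      PStep (.op .or (.op j A B) (.op j C D)) (.op j (.op .or A C) (.op .or B D))
  | c_up (j : POp) (hj : j = .pi0 ∨ j = .pi1) (A B C D : PF) :
      PStep (.op j (.op .and A C) (.op .and B D)) (.op .and (.op j A B) (.op j C D))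
  | eq_down {E F : PF} (h : PAx E F) : PStep E F
  | eq_up {E F : PF} (h : PAx E F) : PStep F.neg E.neg
  | congL {A A'} (o : POp) (B : PF) (h : PStep A A') : PStep (.op o A B) (.op o A' B)
  | congR {B B'} (o : POp) (A : PF) (h : PStep B B') : PStep (.op o A B) (.op o A B')

/-- A derivation in `P` from `A` to `B`: a finite concatenation of rule
instances. -/
def PDeriv : PF → PF → Prop := Relation.ReflTransGen PStep

theorem PF.eval_neg (v : ℕ → Bool) (A : PF) : A.neg.eval v = !(A.eval v) := by
  induction A with
  | op o A B ihA ihB => cases o <;> simp [PF.neg, POp.neg, PF.eval, ihA, ihB]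
  | _ => simp [PF.neg, PF.eval]

theorem PAx.eval_eq {A B : PF} (h : PAx A B) (v : ℕ → Bool) : A.eval v = B.eval v := by
  cases h with
  | assoc o A B C => cases o <;> simp [PF.eval, Bool.and_assoc, Bool.or_assoc]
  | comm_and A B => simp [PF.eval, Bool.and_comm]
  | comm_or A B => simp [PF.eval, Bool.or_comm]
  | em_const u hu => simp [PF.eval, PF.eval_neg]
  | _ => simp [PF.eval]

theorem PEqv.eval_eq {A B : PF} (h : PEqv A B) (v : ℕ → Bool) : A.eval v = B.eval v := by
  induction h with
  | ax h => exact h.eval_eq v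
  | refl A => rfl
  | symm _ ih => exact ih.symm
  | trans _ _ ih₁ ih₂ => exact ih₁.trans ih₂
  | congr o _ _ ih₁ ih₂ => cases o <;> simp [PF.eval, ih₁, ih₂]

theorem PStep.sound {A B : PF} (h : PStep A B) (v : ℕ → Bool) :
    A.eval v = true → B.eval v = true := by
  induction h with
  | eq_down h => rw [h.eval_eq v]; exact id
  | eq_up h => rw [PF.eval_neg, PF.eval_neg, h.eval_eq v]; exact id
  | congL o B _ ih => cases o <;> simp only [PF.eval, Bool.and_eq_true, Bool.or_eq_true] <;> tauto
  | congR o A _ ih => cases o <;> simp only [PF.eval, Bool.and_eq_true, Bool.or_eq_true] <;> tauto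
  | ai_down j hj | ai_up j hj | c_down j hj | c_up j hj =>
    rcases hj with rfl | rfl <;> simp only [PF.eval] <;> exact id
  | _ => simp only [PF.eval, Bool.and_eq_true, Bool.or_eq_true]; tauto

/-- **Soundness of the rules of `P`.**  Every rule instance of `P`
(including the equational rules) is truth-preserving; moreover `=_P`
preserves the value under every valuation; consequently, derivations in `P`
are truth-preserving. -/
theorem P_rules_truth_preserving :
    (∀ A B : PF, PStep A B → ∀ v : ℕ → Bool, A.eval v = true → B.eval v = true) ∧
    (∀ A B : PF, PEqv A B → ∀ v : ℕ → Bool, A.eval v = B.eval v) ∧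
    (∀ A B : PF, PDeriv A B → ∀ v : ℕ → Bool, A.eval v = true → B.eval v = true) := by
  refine ⟨fun A B h v => h.sound v, fun A B h v => h.eval_eq v, fun A B h v hA => ?_⟩
  induction h with
  | refl => exact hA
  | tail _ hs ih => exact hs.sound v ih
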